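/- Assume each P(x_i,x_j) has zero constant term. Let f ∈ ℂ[X,Y] be a polynomial in two variables divisible by the product XY. If φ, ψ ∈ R are nonzero polynomials with P(φ,ψ) = f(φ,ψ), then P₀(φ^low, ψ^low) = 0. -/

import Mathlib

/-!
Write `𝔪` for the ideal generated by the variables, so that `𝔪 ^ k` is the set of polynomials of
order at least `k`. Let `a = ord φ` and `b = ord ψ`. The bracket is determined by its values on
generators (`bracket_eq_sum`):
`P(φ, ψ) = ∑ i, ∑ j, ∂ᵢφ * ∂ⱼψ * P(xᵢ, xⱼ)`.

If `a = 0` or `b = 0`, one of the lowest degree terms is constant and the linearized bracket of the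
lowest terms vanishes. Otherwise replace `φ`, `ψ` and `P(xᵢ, xⱼ)` in this formula by their
components of degrees `a`, `b` and `1`. This changes the sum only by an element of `𝔪 ^ (a + b)`
(`mul_mul_sub_mem`), whereas the resulting sum `P₀(φ^low, ψ^low)` is homogeneous of degree
`a + b - 1`. Since `XY` divides `f`, the product `φψ` divides `f(φ, ψ) = P(φ, ψ)`, so
`P(φ, ψ) ∈ 𝔪 ^ (a + b)`. Hence `P₀(φ^low, ψ^low)` is homogeneous of degree `a + b - 1` and has order
at least `a + b`, so it is zero (`eq_zero_of_isHomogeneous_of_mem_pow`).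
-/

open MvPolynomial

/-- The order of a polynomial: the minimal total degree of a nonzero
homogeneous component. -/
noncomputable def mvOrd {σ : Type*} (f : MvPolynomial σ ℂ) : ℕ :=
  sInf {d : ℕ | MvPolynomial.homogeneousComponent d f ≠ 0}

/-- The lowest degree term of a polynomial: its nonzero homogeneous component
of minimal total degree. -/
noncomputable def mvLow {σ : Type*} (f : MvPolynomial σ ℂ) : MvPolynomial σ ℂ :=
  MvPolynomial.homogeneousComponent (mvOrd f) f

section Order

variable {σ : Type*}

lemma coeff_eq_zero_of_degree_lt_mvOrd {p : MvPolynomial σ ℂ} {d : σ →₀ ℕ}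
    (hd : d.degree < mvOrd p) : coeff d p = 0 := by
  have h : homogeneousComponent d.degree p = 0 := by
    by_contra h
    exact Nat.notMem_of_lt_sInf hd h
  have h' := congrArg (coeff d) h
  simpa [coeff_homogeneousComponent] using h'

lemma mem_pow_mvOrd (p : MvPolynomial σ ℂ) : p ∈ idealOfVars σ ℂ ^ mvOrd p :=
  (mem_pow_idealOfVars_iff' _ _).2 fun _ hd => coeff_eq_zero_of_degree_lt_mvOrd hd

lemma isHomogeneous_mvLow (p : MvPolynomial σ ℂ) : (mvLow p).IsHomogeneous (mvOrd p) :=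
  homogeneousComponent_isHomogeneous _ _

/-- Removing the component of the lowest possible degree raises the order. -/
lemma sub_homogeneousComponent_mem {p : MvPolynomial σ ℂ} {k : ℕ} (hp : p ∈ idealOfVars σ ℂ ^ k) :
    p - homogeneousComponent k p ∈ idealOfVars σ ℂ ^ (k + 1) := by
  rw [mem_pow_idealOfVars_iff'] at hp ⊢
  intro d hd
  rw [coeff_sub, coeff_homogeneousComponent]
  split_ifs with h
  · exact sub_self _
  · rw [hp d (by omega), sub_zero]

lemma mem_pow_of_isHomogeneous {p : MvPolynomial σ ℂ} {k : ℕ} (hp : p.IsHomogeneous k) :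
    p ∈ idealOfVars σ ℂ ^ k :=
  (mem_pow_idealOfVars_iff' _ _).2 fun _ hd => hp.coeff_eq_zero hd.ne

lemma pderiv_mem_pow {p : MvPolynomial σ ℂ} {k : ℕ} (i : σ)
    (hp : p ∈ idealOfVars σ ℂ ^ (k + 1)) : pderiv i p ∈ idealOfVars σ ℂ ^ k := by
  rw [mem_pow_idealOfVars_iff'] at hp ⊢
  intro d hd
  rw [coeff_pderiv, hp _ (by simpa using hd), zero_mul]

lemma eq_zero_of_isHomogeneous_of_mem_pow {p : MvPolynomial σ ℂ} {k : ℕ}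
    (hp : p.IsHomogeneous k) (hp' : p ∈ idealOfVars σ ℂ ^ (k + 1)) : p = 0 := by
  rw [mem_pow_idealOfVars_iff'] at hp'
  ext d
  rw [coeff_zero]
  by_cases h : d.degree = k
  · exact hp' d (by omega)
  · exact hp.coeff_eq_zero h

lemma mem_pow_one_of_constantCoeff_eq_zero {p : MvPolynomial σ ℂ} (hp : constantCoeff p = 0) :
    p ∈ idealOfVars σ ℂ ^ 1 := by
  rw [mem_pow_idealOfVars_iff']
  intro d hd
  obtain rfl : d = 0 := (Finsupp.degree_eq_zero_iff d).1 (by omega)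
  exact hp

/-- Derivatives of a polynomial whose lowest degree term is constant. -/
lemma pderiv_mvLow_eq_zero {p : MvPolynomial σ ℂ} (hp : mvOrd p = 0) (i : σ) :
    pderiv i (mvLow p) = 0 := by
  rw [mvLow, hp, homogeneousComponent_zero, pderiv_C]

/-- A triple product changes only in higher order when each factor is replaced by a leading part. -/
lemma mul_mul_sub_mem {R : Type*} [CommRing R] {I : Ideal R} {A A₀ B B₀ C C₀ : R} {p q r : ℕ}
    (hA₀ : A₀ ∈ I ^ p) (hA : A - A₀ ∈ I ^ (p + 1))
    (hB : B ∈ I ^ q) (hB₀ : B₀ ∈ I ^ q) (hB' : B - B₀ ∈ I ^ (q + 1))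
    (hC : C ∈ I ^ r) (hC' : C - C₀ ∈ I ^ (r + 1)) :
    A * B * C - A₀ * B₀ * C₀ ∈ I ^ (p + q + r + 1) := by
  have h : A * B * C - A₀ * B₀ * C₀ =
      (A - A₀) * B * C + A₀ * (B - B₀) * C + A₀ * B₀ * (C - C₀) := by ring
  have mem : ∀ {x y z : R} {k l m : ℕ}, x ∈ I ^ k → y ∈ I ^ l → z ∈ I ^ m →
      k + l + m = p + q + r + 1 → x * y * z ∈ I ^ (p + q + r + 1) := by
    intro x y z k l m hx hy hz e
    rw [← e, pow_add, pow_add]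
    exact Ideal.mul_mem_mul (Ideal.mul_mem_mul hx hy) hz
  rw [h]
  exact add_mem (add_mem (mem hA hB hC (by omega)) (mem hA₀ hB' hC (by omega)))
    (mem hA₀ hB₀ hC' (by omega))

end Order

/-- A map that is a derivation in its first argument is given by the chain rule. -/
lemma bracket_eq_sum_left {n : ℕ}
    {P : MvPolynomial (Fin n) ℂ → MvPolynomial (Fin n) ℂ → MvPolynomial (Fin n) ℂ}
    (hadd : ∀ a b c, P (a + b) c = P a c + P b c)
    (hsmul : ∀ (r : ℂ) (a b), P (r • a) b = r • P a b)
    (hleib : ∀ a b c, P (a * b) c = a * P b c + b * P a c)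
    (a c : MvPolynomial (Fin n) ℂ) :
    P a c = ∑ i, pderiv i a * P (X i) c := by
  let D : Derivation ℂ (MvPolynomial (Fin n) ℂ) (MvPolynomial (Fin n) ℂ) :=
    Derivation.mk' { toFun := fun a => P a c
                     map_add' := fun a b => hadd a b c
                     map_smul' := fun r a => hsmul r a c } fun a b => hleib a b c
  have hD : D = ∑ i, P (X i) c • pderiv i := by
    refine derivation_ext fun j => ?_
    have h : (∑ i, P (X i) c • pderiv (R := ℂ) i) (X j) =
        ∑ i, P (X i) c * pderiv i (X j) := by
      rw [← Derivation.coeFnAddMonoidHom_apply, map_sum, Finset.sum_apply]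
      rfl
    rw [h, Finset.sum_eq_single j]
    · rw [pderiv_X_self, mul_one]
      rfl
    · intro i _ hi
      rw [pderiv_X_of_ne hi.symm, mul_zero]
    · simp
  have h := congrArg (fun E : Derivation ℂ _ _ => E a) hD
  change P a c = (∑ i, P (X i) c • pderiv (R := ℂ) i) a at h
  rw [h, ← Derivation.coeFnAddMonoidHom_apply, map_sum, Finset.sum_apply]
  exact Finset.sum_congr rfl fun i _ => mul_comm _ _

lemma bracket_eq_sum {n : ℕ}
    {P : MvPolynomial (Fin n) ℂ → MvPolynomial (Fin n) ℂ → MvPolynomial (Fin n) ℂ}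
    (hadd : ∀ a b c, P (a + b) c = P a c + P b c)
    (hsmul : ∀ (r : ℂ) (a b), P (r • a) b = r • P a b)
    (hskew : ∀ a b, P a b = - P b a)
    (hleib : ∀ a b c, P (a * b) c = a * P b c + b * P a c)
    (a c : MvPolynomial (Fin n) ℂ) :
    P a c = ∑ i, ∑ j, pderiv i a * pderiv j c * P (X i) (X j) := by
  rw [bracket_eq_sum_left hadd hsmul hleib]
  refine Finset.sum_congr rfl fun i _ => ?_
  rw [hskew, bracket_eq_sum_left hadd hsmul hleib, ← Finset.sum_neg_distrib, Finset.mul_sum]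
  refine Finset.sum_congr rfl fun j _ => ?_
  rw [hskew (X i) (X j)]
  ring

/-- for a Poisson-type bracket `P` on `ℂ[x₁,…,x_n]` whose
brackets of generators have zero constant term, if `P(φ,ψ) = f(φ,ψ)` for
some two-variable polynomial `f` divisible by the product of the two
variables, then the linearized bracket of the lowest degree terms vanishes. -/
theorem relaxed_log_canonical_pair_linearized_involutive
    (n : ℕ)
    (P : MvPolynomial (Fin n) ℂ → MvPolynomial (Fin n) ℂ → MvPolynomial (Fin n) ℂ)
    (hadd : ∀ a b c, P (a + b) c = P a c + P b c)
    (hsmul : ∀ (r : ℂ) (a b), P (r • a) b = r • P a b)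
    (hskew : ∀ a b, P a b = - P b a)
    (hleib : ∀ a b c, P (a * b) c = a * P b c + b * P a c)
    (hconst : ∀ i j, constantCoeff (P (X i) (X j)) = 0)
    (f : MvPolynomial (Fin 2) ℂ)
    (hdiv : (X 0 * X 1 : MvPolynomial (Fin 2) ℂ) ∣ f)
    (φ ψ : MvPolynomial (Fin n) ℂ) (hφ : φ ≠ 0) (hψ : ψ ≠ 0)
    (hPval : P φ ψ = aeval ![φ, ψ] f) :
    ∑ i : Fin n, ∑ j : Fin n,
      pderiv i (mvLow φ) * pderiv j (mvLow ψ) *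
        homogeneousComponent 1 (P (X i) (X j)) = 0 := by
  rcases ha : mvOrd φ with _ | p
  · simp [pderiv_mvLow_eq_zero ha]
  rcases hb : mvOrd ψ with _ | q
  · simp [pderiv_mvLow_eq_zero hb]
  have hφm := mem_pow_mvOrd φ
  have hψm := mem_pow_mvOrd ψ
  have hφh := isHomogeneous_mvLow φ
  have hψh := isHomogeneous_mvLow ψ
  have hφs : φ - mvLow φ ∈ _ := sub_homogeneousComponent_mem hφm
  have hψs : ψ - mvLow ψ ∈ _ := sub_homogeneousComponent_mem hψm
  rw [ha] at hφm hφh hφs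
  rw [hb] at hψm hψh hψs
  refine eq_zero_of_isHomogeneous_of_mem_pow (k := p + q + 1) ?_ ?_
  · exact IsHomogeneous.sum _ _ _ fun i _ => IsHomogeneous.sum _ _ _ fun j _ =>
      (hφh.pderiv.mul hψh.pderiv).mul (homogeneousComponent_isHomogeneous _ _)
  · have hP : P φ ψ ∈ idealOfVars (Fin n) ℂ ^ (p + q + 1 + 1) := by
      obtain ⟨g, rfl⟩ := hdiv
      rw [hPval, map_mul, map_mul, aeval_X, aeval_X,
        show p + q + 1 + 1 = (p + 1) + (q + 1) by ring, pow_add]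
      exact Ideal.mul_mem_right _ _ (Ideal.mul_mem_mul hφm hψm)
    rw [← sub_sub_cancel (P φ ψ) (∑ i, ∑ j, _)]
    refine sub_mem hP ?_
    rw [bracket_eq_sum hadd hsmul hskew hleib φ ψ, ← Finset.sum_sub_distrib]
    refine sum_mem fun i _ => ?_
    rw [← Finset.sum_sub_distrib]
    refine sum_mem fun j _ => ?_
    have hij := mem_pow_one_of_constantCoeff_eq_zero (hconst i j)
    refine mul_mul_sub_mem (mem_pow_of_isHomogeneous hφh.pderiv) ?_ (pderiv_mem_pow j hψm)
      (mem_pow_of_isHomogeneous hψh.pderiv) ?_ hij (sub_homogeneousComponent_mem hij)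
    · rw [← map_sub]
      exact pderiv_mem_pow i hφs
    · rw [← map_sub]
      exact pderiv_mem_pow j hψs
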